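/- Let d ≥ 2, let g ∈ GL_d(K̃), and let Λ = gR^d. Then there exist a matrix u with entries in O and |det u| = 1 (i.e. u ∈ GL_d(O)) and a matrix h with entries in R and |det h| = 1 such that u·g·h = diag(x^{m₁},…,x^{m_d}), where m_i ∈ ℤ is defined by q^{m_i} = λ_i(Λ) for i = 1,…,d. In particular uΛ = diag(x^{m₁},…,x^{m_d})R^d. -/

import Mathlib

noncomputable section

open scoped Classical

variable (Fq : Type) [Field Fq] [Fintype Fq]

/-- `K̃ = 𝔽_q((x⁻¹))`, realized as formal Laurent series in `t = x⁻¹`. -/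
abbrev Kt := LaurentSeries Fq

/-- The element `x` of `K̃` (the inverse of the Laurent series variable). -/
def Kx : Kt Fq := HahnSeries.single (-1 : ℤ) 1

/-- Absolute value `|f| = q^{deg f}`, i.e. `q^{-order f}` in terms of `t = x⁻¹`. -/
def Kabs (f : Kt Fq) : ℝ := if f = 0 then 0 else (Fintype.card Fq : ℝ) ^ (-f.order)

/-- The ring embedding of `R = 𝔽_q[x]` into `K̃`. -/
def polyK : Polynomial Fq →+* Kt Fq := (Polynomial.aeval (Kx Fq)).toRingHom

/-- Sup norm on `K̃^d`. -/
def vnorm {d : ℕ} (v : Fin d → Kt Fq) : ℝ := ⨆ i, Kabs Fq (v i)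

/-- The lattice `g·R^d`. -/
def lattice {d : ℕ} (g : Matrix (Fin d) (Fin d) (Kt Fq)) : Set (Fin d → Kt Fq) :=
  {v | ∃ c : Fin d → Polynomial Fq, v = g.mulVec fun j => polyK Fq (c j)}

/-- `i`-th successive minimum of `Λ` with respect to a norm `nrm`: the least `r > 0` such that
`Λ` contains `i` linearly independent vectors of norm at most `r`. -/
def minimaN {d : ℕ} (nrm : (Fin d → Kt Fq) → ℝ) (Λ : Set (Fin d → Kt Fq)) (i : ℕ) : ℝ :=
  sInf {r : ℝ | 0 < r ∧ ∃ v : Fin i → Fin d → Kt Fq,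
    (∀ j, v j ∈ Λ) ∧ LinearIndependent (Kt Fq) v ∧ ∀ j, nrm (v j) ≤ r}

/-- `i`-th successive minimum with respect to the sup norm. -/
def minima {d : ℕ} (Λ : Set (Fin d → Kt Fq)) (i : ℕ) : ℝ := minimaN Fq (vnorm Fq) Λ i

/-- Covering radius of `Λ` with respect to the norm `nrm`. -/
def covRad {d : ℕ} (nrm : (Fin d → Kt Fq) → ℝ) (Λ : Set (Fin d → Kt Fq)) : ℝ :=
  ⨆ w : Fin d → Kt Fq, ⨅ u : Λ, nrm (w - u.1)

/-- Length of the shortest nonzero vector of `Λ`. -/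
def ell {d : ℕ} (Λ : Set (Fin d → Kt Fq)) : ℝ :=
  sInf {r : ℝ | ∃ v ∈ Λ, v ≠ 0 ∧ vnorm Fq v = r}

/-- `Λ` is well rounded: it contains `d` linearly independent vectors of norm `ℓ(Λ)`. -/
def IsWellRounded {d : ℕ} (Λ : Set (Fin d → Kt Fq)) : Prop :=
  ∃ v : Fin d → Fin d → Kt Fq, (∀ j, v j ∈ Λ) ∧ LinearIndependent (Kt Fq) v ∧
    ∀ j, vnorm Fq (v j) = ell Fq Λ

/-- The multiplicative "norm" `N(v) = ∏ |v i|`. -/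
def Nprod {d : ℕ} (v : Fin d → Kt Fq) : ℝ := ∏ i, Kabs Fq (v i)

/-- The Minkowski function `μ(Λ) = sup_w inf_{u ∈ Λ} N(w - u)`. -/
def mink {d : ℕ} (Λ : Set (Fin d → Kt Fq)) : ℝ :=
  ⨆ w : Fin d → Kt Fq, ⨅ u : Λ, Nprod Fq (w - u.1)

/-!
Write `g = W · diag(x^{n₁}, …, x^{n_d})` with `W` over `O`. If `det W` is not a unit, then `W` mod
`x⁻¹` kills a nonzero vector `c` over `𝔽_q`. Take `j` with `c_j ≠ 0` and `n_j` maximal: replacing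
column `j` of `W` by `W c` amounts to a column operation on `g` over `R`, and since `W c` is
divisible by `x⁻¹`, that factor can be moved into the diagonal, lowering `n_j` by one. Each such
step strips a factor `x⁻¹` from `det W`, so eventually `W ∈ GL_d(O)`.

Since `GL_d(R)` preserves `R^d` and `GL_d(O)` acts by isometries, the successive minima are those of
the diagonal lattice. There a nonzero `k`-th coordinate has absolute value at least `q^{m_k}`, and
with the `m_k` increasing, `i + 1` independent vectors cannot all live on the first `i` coordinates.
-/

/-- The inclusion `F⟦x⁻¹⟧ → F((x⁻¹))`, whose image over `𝔽_q` is the ring of integers `O`;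
the power series variable `PowerSeries.X` stands for `x⁻¹`. -/
abbrev seriesK (F : Type) [Field F] : PowerSeries F →+* Kt F := HahnSeries.ofPowerSeries ℤ F

/-- The diagonal matrix `diag(x^{n₁}, …, x^{n_d})`. -/
abbrev diagX (F : Type) [Field F] {ι : Type*} [DecidableEq ι] (n : ι → ℤ) :
    Matrix ι ι (Kt F) :=
  Matrix.diagonal fun i => Kx F ^ n i

section LaurentSeries

open scoped Polynomial PowerSeries

variable {F : Type} [Field F]

lemma Kx_zpow (n : ℤ) : Kx F ^ n = HahnSeries.single (-n) 1 := by
  rw [Kx, RatFunc.single_zpow, RatFunc.single_zpow (-n), ← zpow_mul, neg_one_mul]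

lemma Kx_ne_zero : Kx F ≠ 0 :=
  HahnSeries.single_ne_zero one_ne_zero

lemma seriesK_X : seriesK F PowerSeries.X = Kx F ^ (-1 : ℤ) := by
  rw [Kx_zpow, neg_neg, HahnSeries.ofPowerSeries_X]

lemma polyK_monomial (k : ℕ) (a : F) :
    polyK F (Polynomial.monomial k a) = HahnSeries.single (-(k : ℤ)) a := by
  have hC : algebraMap F (Kt F) a = HahnSeries.single 0 a := by
    rw [HahnSeries.algebraMap_apply', PowerSeries.algebraMap_apply, HahnSeries.ofPowerSeries_C]
    rfl
  simp [polyK, Polynomial.aeval_monomial, ← zpow_natCast, Kx_zpow, hC]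

lemma polyK_C (a : F) : polyK F (Polynomial.C a) = seriesK F (PowerSeries.C a) := by
  rw [← Polynomial.monomial_zero_left, polyK_monomial, HahnSeries.ofPowerSeries_C]
  rfl

lemma polyK_X : polyK F Polynomial.X = Kx F :=
  Polynomial.aeval_X _

lemma coeff_polyK (p : F[X]) (k : ℕ) : (polyK F p).coeff (-(k : ℤ)) = p.coeff k := by
  induction p using Polynomial.induction_on' with
  | add p q hp hq => rw [map_add, HahnSeries.coeff_add, hp, hq, Polynomial.coeff_add]
  | monomial n a =>
    simp [polyK_monomial, HahnSeries.coeff_single, Polynomial.coeff_monomial, eq_comm]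

lemma order_polyK_nonpos (p : F[X]) : (polyK F p).order ≤ 0 := by
  rcases eq_or_ne p 0 with rfl | hp
  · simp
  have hcoeff : (polyK F p).coeff (-(p.natDegree : ℤ)) ≠ 0 := by
    rw [coeff_polyK]
    exact Polynomial.leadingCoeff_ne_zero.2 hp
  exact (HahnSeries.order_le_of_coeff_ne_zero hcoeff).trans (by omega)

lemma order_seriesK_nonneg (p : F⟦X⟧) : 0 ≤ (seriesK F p).order := by
  rcases eq_or_ne (seriesK F p) 0 with hp | hp
  · rw [hp, HahnSeries.order_zero]
  by_contra! hneg
  refine HahnSeries.coeff_order_eq_zero.not.2 hp ?_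
  rw [HahnSeries.ofPowerSeries_apply]
  refine HahnSeries.embDomain_of_notMem_range ?_
  rintro ⟨n, hn⟩
  exact hneg.not_ge (hn ▸ Int.natCast_nonneg n)

lemma exists_eq_map_seriesK_mul_diagX {ι : Type*} [Fintype ι] [DecidableEq ι]
    (g : Matrix ι ι (Kt F)) :
    ∃ (W : Matrix ι ι F⟦X⟧) (n : ι → ℤ), g = W.map (seriesK F) * diagX F n := by
  obtain ⟨⟨_, k, rfl⟩, hk⟩ := IsLocalization.exist_integer_multiples_of_finite
    (Submonoid.powers (PowerSeries.X : F⟦X⟧)) fun ij : ι × ι => g ij.1 ij.2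
  choose W hW using hk
  refine ⟨Matrix.of fun i j => W (i, j), fun _ => k, ?_⟩
  ext1 i j
  have hWij : seriesK F (W (i, j)) = seriesK F (PowerSeries.X ^ k) * g i j := by
    exact (hW (i, j)).trans (Algebra.smul_def _ _)
  rw [Matrix.mul_diagonal, Matrix.map_apply, Matrix.of_apply, hWij, map_pow, seriesK_X,
    mul_right_comm, zpow_neg_one, zpow_natCast, inv_pow,
    inv_mul_cancel₀ (pow_ne_zero k Kx_ne_zero), one_mul]

end LaurentSeries

section Factorization

open scoped Matrix Polynomial PowerSeries

variable {F : Type} [Field F] {ι : Type*} [Fintype ι]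

lemma exists_mulVec_C_eq_X_smul {R κ : Type*} [CommSemiring R] {W : Matrix κ ι R⟦X⟧} {c : ι → R}
    (hc : W.map PowerSeries.constantCoeff *ᵥ c = 0) :
    ∃ v : κ → R⟦X⟧, W *ᵥ (fun i => PowerSeries.C (c i)) = (PowerSeries.X : R⟦X⟧) • v := by
  have hdvd (i : κ) : PowerSeries.X ∣ (W *ᵥ fun i => PowerSeries.C (c i)) i := by
    rw [PowerSeries.X_dvd_iff, RingHom.map_mulVec]
    simpa [Function.comp_def] using congrFun hc i
  choose v hv using hdvd
  exact ⟨v, funext hv⟩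

variable [DecidableEq ι]

lemma det_one_updateCol {R : Type*} [CommRing R] (j : ι) (v : ι → R) :
    ((1 : Matrix ι ι R).updateCol j v).det = v j := by
  rw [← Matrix.cramer_apply, Matrix.cramer_one, Module.End.one_apply]

lemma isUnit_one_updateCol {R : Type*} [CommRing R] {j : ι} {v : ι → R} :
    IsUnit ((1 : Matrix ι ι R).updateCol j v) ↔ IsUnit (v j) := by
  rw [Matrix.isUnit_iff_isUnit_det, det_one_updateCol]

lemma updateCol_mul_diagonal_update_one {R : Type*} [CommRing R] (A : Matrix ι ι R) (j : ι)
    (v : ι → R) (a : R) :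
    A.updateCol j v * Matrix.diagonal (Function.update 1 j a) = A.updateCol j (a • v) := by
  ext i k
  rcases eq_or_ne k j with rfl | hk
  · simp [mul_comm]
  · simp [hk]

lemma det_diagonal_update_one {R : Type*} [CommRing R] (j : ι) (a : R) :
    (Matrix.diagonal (Function.update (1 : ι → R) j a)).det = a := by
  simp [Finset.prod_update_of_mem]

lemma exists_constantCoeff_mulVec_eq_zero {W : Matrix ι ι F⟦X⟧} (hW : ¬ IsUnit W) :
    ∃ c : ι → F, c ≠ 0 ∧ W.map PowerSeries.constantCoeff *ᵥ c = 0 := by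
  rw [Matrix.exists_mulVec_eq_zero_iff, ← RingHom.mapMatrix_apply, ← RingHom.map_det]
  simpa only [Matrix.isUnit_iff_isUnit_det, PowerSeries.isUnit_iff_constantCoeff,
    isUnit_iff_ne_zero, not_not] using hW

lemma exists_diagX_mul_map_polyK_eq {n : ι → ℤ} {c : ι → F} {j : ι} (hcj : c j ≠ 0)
    (hj : ∀ i, c i ≠ 0 → n i ≤ n j) :
    ∃ h : Matrix ι ι F[X], IsUnit h ∧ diagX F n * h.map (polyK F) =
      ((1 : Matrix ι ι F⟦X⟧).updateCol j fun i => PowerSeries.C (c i)).map (seriesK F) *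
        diagX F n := by
  refine ⟨(1 : Matrix ι ι F[X]).updateCol j fun i =>
    Polynomial.C (c i) * Polynomial.X ^ (n j - n i).toNat, ?_, ?_⟩
  · rw [isUnit_one_updateCol, sub_self, Int.toNat_zero, pow_zero, mul_one]
    exact hcj.isUnit.map _
  · ext1 i k
    rw [Matrix.diagonal_mul, Matrix.mul_diagonal, Matrix.map_apply, Matrix.map_apply]
    rcases eq_or_ne k j with rfl | hk
    · simp only [Matrix.updateCol_self, map_mul, map_pow, polyK_C, polyK_X]
      rcases eq_or_ne (c i) 0 with hci | hci
      · simp [hci]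
      · rw [← zpow_natCast, Int.toNat_of_nonneg (sub_nonneg.2 (hj i hci)), mul_left_comm,
          ← zpow_add₀ Kx_ne_zero, add_sub_cancel]
    · rcases eq_or_ne i k with rfl | hik
      · simp [hk]
      · simp [hk, hik]

lemma map_diagonal_update_X_mul_diagX (n : ι → ℤ) (j : ι) :
    (Matrix.diagonal (Function.update (1 : ι → F⟦X⟧) j PowerSeries.X)).map (seriesK F) *
      diagX F n = diagX F (Function.update n j (n j - 1)) := by
  rw [Matrix.diagonal_map (map_zero _), Matrix.diagonal_mul_diagonal]
  congr 1
  ext1 i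
  rcases eq_or_ne i j with rfl | hi
  · rw [Function.update_self, Function.update_self, seriesK_X,
      ← zpow_add₀ Kx_ne_zero, neg_add_eq_sub]
  · simp [hi]

lemma exists_dvdNotUnit_det {W : Matrix ι ι F⟦X⟧} (hdet : W.det ≠ 0)
    (hW : ¬ IsUnit W) (n : ι → ℤ) :
    ∃ (W' : Matrix ι ι F⟦X⟧) (h : Matrix ι ι F[X]) (n' : ι → ℤ),
      DvdNotUnit W'.det W.det ∧ IsUnit h ∧
      W.map (seriesK F) * diagX F n * h.map (polyK F) = W'.map (seriesK F) * diagX F n' := by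
  obtain ⟨c, hc, hWc⟩ := exists_constantCoeff_mulVec_eq_zero hW
  obtain ⟨v, hv⟩ := exists_mulVec_C_eq_X_smul hWc
  -- With `n j` maximal, the column operation carried past `diagX F n` stays polynomial.
  obtain ⟨j, hcj, hj⟩ : ∃ j, c j ≠ 0 ∧ ∀ i, c i ≠ 0 → n i ≤ n j := by
    simpa using Finset.exists_max_image ({i | c i ≠ 0} : Finset ι) n
      (by simpa [Finset.Nonempty] using Function.ne_iff.1 hc)
  set E := (1 : Matrix ι ι F⟦X⟧).updateCol j fun i => PowerSeries.C (c i)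
  have hWE : W * E =
      W.updateCol j v * Matrix.diagonal (Function.update 1 j PowerSeries.X) := by
    rw [updateCol_mul_diagonal_update_one, ← hv, Matrix.mul_updateCol, mul_one]
  have hdetWE : W.det * PowerSeries.C (c j) = (W.updateCol j v).det * PowerSeries.X := by
    simpa only [Matrix.det_mul, det_diagonal_update_one, E, det_one_updateCol] using
      congrArg Matrix.det hWE
  obtain ⟨h, hh, hnh⟩ := exists_diagX_mul_map_polyK_eq hcj hj
  refine ⟨W.updateCol j v, h, Function.update n j (n j - 1), ?_, hh, ?_⟩
  · have hunit : IsUnit (PowerSeries.C (c j)) := hcj.isUnit.map _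
    refine dvdNotUnit_of_dvdNotUnit_associated ?_ (associated_mul_unit_left _ _ hunit)
    rw [hdetWE]
    refine ⟨fun hzero => ?_, PowerSeries.X, PowerSeries.X_prime.not_isUnit, rfl⟩
    rw [hzero, zero_mul] at hdetWE
    exact mul_ne_zero hdet hunit.ne_zero hdetWE
  · rw [mul_assoc, hnh, ← mul_assoc, ← Matrix.map_mul, hWE, Matrix.map_mul,
      mul_assoc, map_diagonal_update_X_mul_diagX]

theorem exists_map_mul_diagX_mul_eq {W : Matrix ι ι F⟦X⟧} (hdet : W.det ≠ 0) (n : ι → ℤ) :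
    ∃ (V : Matrix ι ι F⟦X⟧) (h : Matrix ι ι F[X]) (m : ι → ℤ), IsUnit V ∧ IsUnit h ∧
      W.map (seriesK F) * diagX F n * h.map (polyK F) = V.map (seriesK F) * diagX F m := by
  induction hδ : W.det using (wellFounded_dvdNotUnit (α := F⟦X⟧)).induction
    generalizing W n with | _ δ ih
  subst hδ
  by_cases hW : IsUnit W
  · exact ⟨W, 1, n, hW, isUnit_one, by simp⟩
  obtain ⟨W', h, n', hlt, hh, hstep⟩ := exists_dvdNotUnit_det hdet hW n
  obtain ⟨V, h', m, hV, hh', hrec⟩ := ih _ hlt hlt.1 n' rfl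
  refine ⟨V, h * h', m, hV, hh.mul hh', ?_⟩
  rw [Matrix.map_mul, ← mul_assoc, hstep, hrec]

theorem exists_mul_map_polyK_eq {g : Matrix ι ι (Kt F)} (hg : g.det ≠ 0) :
    ∃ (V : Matrix ι ι F⟦X⟧) (h : Matrix ι ι F[X]) (m : ι → ℤ), IsUnit V ∧ IsUnit h ∧
      g * h.map (polyK F) = V.map (seriesK F) * diagX F m := by
  obtain ⟨W, n, rfl⟩ := exists_eq_map_seriesK_mul_diagX g
  refine exists_map_mul_diagX_mul_eq (fun hW => hg ?_) n
  rw [Matrix.det_mul, ← RingHom.mapMatrix_apply, ← RingHom.map_det, hW, map_zero, zero_mul]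

theorem exists_map_mul_mul_map_eq_diagX_monotone {d : ℕ} {g : Matrix (Fin d) (Fin d) (Kt F)}
    (hg : g.det ≠ 0) :
    ∃ (u : Matrix (Fin d) (Fin d) F⟦X⟧) (h : Matrix (Fin d) (Fin d) F[X]) (m : Fin d → ℤ),
      IsUnit u ∧ IsUnit h ∧ Monotone m ∧ u.map (seriesK F) * g * h.map (polyK F) = diagX F m := by
  obtain ⟨V, h, m, ⟨V, rfl⟩, hh, hgh⟩ := exists_mul_map_polyK_eq hg
  have hVgh : (↑V⁻¹ : Matrix _ _ F⟦X⟧).map (seriesK F) * g * h.map (polyK F) = diagX F m := by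
    rw [mul_assoc, hgh, ← mul_assoc, ← Matrix.map_mul, Units.inv_mul,
      Matrix.map_one _ (map_zero _) (map_one _), one_mul]
  set σ := Tuple.sort m
  refine ⟨(↑V⁻¹ : Matrix _ _ F⟦X⟧).submatrix σ id, h.submatrix id σ, m ∘ σ, ?_, ?_,
    Tuple.monotone_sort m, ?_⟩
  · exact (Matrix.isUnit_submatrix_equiv σ (Equiv.refl _)).2 V⁻¹.isUnit
  · exact (Matrix.isUnit_submatrix_equiv (Equiv.refl _) σ).2 hh
  · exact (congrArg (Matrix.submatrix · σ σ) hVgh).trans (Matrix.submatrix_diagonal_equiv _ σ)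

end Factorization

section Lattice

open scoped Matrix Polynomial

variable {F : Type} [Field F] {d : ℕ}

lemma lattice_mul (A g : Matrix (Fin d) (Fin d) (Kt F)) :
    lattice F (A * g) = A.mulVecLin '' lattice F g := by
  ext v
  constructor
  · rintro ⟨c, rfl⟩
    exact ⟨_, ⟨c, rfl⟩, by rw [Matrix.mulVecLin_apply, Matrix.mulVec_mulVec]⟩
  · rintro ⟨_, ⟨c, rfl⟩, rfl⟩
    exact ⟨c, by rw [Matrix.mulVecLin_apply, Matrix.mulVec_mulVec]⟩

lemma lattice_mul_map_polyK_subset (g : Matrix (Fin d) (Fin d) (Kt F))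
    (h : Matrix (Fin d) (Fin d) F[X]) : lattice F (g * h.map (polyK F)) ⊆ lattice F g := by
  rintro _ ⟨c, rfl⟩
  refine ⟨h *ᵥ c, ?_⟩
  rw [← Matrix.mulVec_mulVec]
  congr 1
  ext1 i
  exact (RingHom.map_mulVec (polyK F) h c i).symm

lemma lattice_mul_map_polyK (g : Matrix (Fin d) (Fin d) (Kt F))
    {h : Matrix (Fin d) (Fin d) F[X]} (hh : IsUnit h) :
    lattice F (g * h.map (polyK F)) = lattice F g := by
  refine (lattice_mul_map_polyK_subset g h).antisymm ?_
  obtain ⟨h, rfl⟩ := hh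
  have hcancel : g * h.val.map (polyK F) * (h⁻¹).val.map (polyK F) = g := by
    rw [mul_assoc, ← Matrix.map_mul, Units.mul_inv, Matrix.map_one _ (map_zero _) (map_one _),
      mul_one]
  calc lattice F g = lattice F (g * h.val.map (polyK F) * (h⁻¹).val.map (polyK F)) := by
        rw [hcancel]
    _ ⊆ lattice F (g * h.val.map (polyK F)) := lattice_mul_map_polyK_subset _ _

lemma minimaN_image {e : ℕ} {nrm : (Fin d → Kt F) → ℝ} {nrm' : (Fin e → Kt F) → ℝ}
    (f : (Fin d → Kt F) →ₗ[Kt F] (Fin e → Kt F)) (hf : Function.Injective f)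
    (hnrm : ∀ v, nrm' (f v) = nrm v) (Λ : Set (Fin d → Kt F)) (i : ℕ) :
    minimaN F nrm' (f '' Λ) i = minimaN F nrm Λ i := by
  have hker : LinearMap.ker f = ⊥ := LinearMap.ker_eq_bot.2 hf
  unfold minimaN
  congr! 4 with r
  constructor
  · rintro ⟨v, hv, hli, hvr⟩
    choose w hw hwv using hv
    obtain rfl : f ∘ w = v := funext hwv
    exact ⟨w, hw, hli.of_comp f, fun j => hnrm (w j) ▸ hvr j⟩
  · rintro ⟨w, hw, hli, hwr⟩
    exact ⟨f ∘ w, fun j => Set.mem_image_of_mem f (hw j), hli.map' f hker,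
      fun j => (hnrm (w j)).trans_le (hwr j)⟩

lemma exists_eq_zpow_mul_of_mem_lattice_diagX {m : Fin d → ℤ} {v : Fin d → Kt F}
    (hv : v ∈ lattice F (diagX F m)) (k : Fin d) : ∃ p : F[X], v k = Kx F ^ m k * polyK F p := by
  obtain ⟨c, rfl⟩ := hv
  exact ⟨c k, Matrix.mulVec_diagonal ..⟩

lemma single_zpow_mem_lattice_diagX (m : Fin d → ℤ) (k : Fin d) :
    Pi.single k (Kx F ^ m k) ∈ lattice F (diagX F m) := by
  refine ⟨Pi.single k 1, ?_⟩
  ext1 i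
  rw [Matrix.mulVec_diagonal]
  rcases eq_or_ne i k with rfl | hik
  · simp
  · simp [hik]

lemma exists_notMem_apply_ne_zero {K ι κ : Type*} [Field K] [Fintype κ]
    {v : κ → ι → K} (hv : LinearIndependent K v) {s : Finset ι} (hs : s.card < Fintype.card κ) :
    ∃ j, ∃ k ∉ s, v j k ≠ 0 := by
  by_contra! hzero
  have hdisj : Disjoint (Submodule.span K (Set.range v))
      (LinearMap.ker (LinearMap.funLeft K K ((↑) : s → ι))) := by
    rw [Submodule.disjoint_def]
    intro w hw hker
    have hw_zero (k : ι) (hk : k ∉ s) : w k = 0 := by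
      have hle : Submodule.span K (Set.range v) ≤ LinearMap.ker (LinearMap.proj k) :=
        Submodule.span_le.2 (Set.range_subset_iff.2 fun j => hzero j k hk)
      exact hle hw
    ext1 k
    by_cases hk : k ∈ s
    · exact congrFun hker ⟨k, hk⟩
    · exact hw_zero k hk
  have hcard := (hv.map hdisj).fintype_card_le_finrank
  rw [Module.finrank_fintype_fun_eq_card, Fintype.card_coe] at hcard
  exact hs.not_ge hcard

end Lattice

section AbsoluteValue

open scoped Matrix Polynomial PowerSeries

variable {Fq}

lemma one_lt_card_cast : (1 : ℝ) < Fintype.card Fq :=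
  Nat.one_lt_cast.2 Fintype.one_lt_card

lemma Kabs_zero : Kabs Fq 0 = 0 :=
  if_pos rfl

lemma Kabs_of_ne_zero {f : Kt Fq} (hf : f ≠ 0) :
    Kabs Fq f = (Fintype.card Fq : ℝ) ^ (-f.order) :=
  if_neg hf

lemma Kabs_nonneg (f : Kt Fq) : 0 ≤ Kabs Fq f := by
  unfold Kabs
  positivity

lemma Kabs_mul (f g : Kt Fq) : Kabs Fq (f * g) = Kabs Fq f * Kabs Fq g := by
  rcases eq_or_ne f 0 with rfl | hf
  · simp [Kabs_zero]
  rcases eq_or_ne g 0 with rfl | hg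
  · simp [Kabs_zero]
  rw [Kabs_of_ne_zero hf, Kabs_of_ne_zero hg, Kabs_of_ne_zero (mul_ne_zero hf hg),
    HahnSeries.order_mul hf hg, neg_add, zpow_add₀ (zero_lt_one.trans one_lt_card_cast).ne']

lemma Kabs_add_le_max (f g : Kt Fq) : Kabs Fq (f + g) ≤ max (Kabs Fq f) (Kabs Fq g) := by
  rcases eq_or_ne f 0 with rfl | hf
  · simp
  rcases eq_or_ne g 0 with rfl | hg
  · simp
  rcases eq_or_ne (f + g) 0 with hfg | hfg
  · rw [hfg, Kabs_zero]
    exact le_max_of_le_left (Kabs_nonneg f)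
  rw [Kabs_of_ne_zero hf, Kabs_of_ne_zero hg, Kabs_of_ne_zero hfg, le_max_iff,
    zpow_le_zpow_iff_right₀ one_lt_card_cast, zpow_le_zpow_iff_right₀ one_lt_card_cast,
    neg_le_neg_iff, neg_le_neg_iff, ← min_le_iff]
  exact HahnSeries.min_order_le_order_add hfg

lemma Kabs_sum_le {ι : Type*} {s : Finset ι} {f : ι → Kt Fq} {r : ℝ} (hr : 0 ≤ r)
    (hf : ∀ i ∈ s, Kabs Fq (f i) ≤ r) : Kabs Fq (∑ i ∈ s, f i) ≤ r :=
  Finset.sum_induction f (Kabs Fq · ≤ r)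
    (fun _ _ ha hb => (Kabs_add_le_max _ _).trans (max_le ha hb)) (Kabs_zero.trans_le hr) hf

lemma Kabs_Kx_zpow (n : ℤ) : Kabs Fq (Kx Fq ^ n) = (Fintype.card Fq : ℝ) ^ n := by
  rw [Kabs_of_ne_zero (zpow_ne_zero n Kx_ne_zero), Kx_zpow, HahnSeries.order_single one_ne_zero,
    neg_neg]

lemma Kabs_seriesK_le_one (p : Fq⟦X⟧) : Kabs Fq (seriesK Fq p) ≤ 1 := by
  rcases eq_or_ne (seriesK Fq p) 0 with hp | hp
  · rw [hp, Kabs_zero]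
    exact zero_le_one
  rw [Kabs_of_ne_zero hp]
  exact zpow_le_one_of_nonpos₀ one_lt_card_cast.le (neg_nonpos.2 (order_seriesK_nonneg p))

lemma Kabs_seriesK_of_isUnit {p : Fq⟦X⟧} (hp : IsUnit p) : Kabs Fq (seriesK Fq p) = 1 := by
  obtain ⟨q, hpq⟩ := hp.exists_right_inv
  have hmul : Kabs Fq (seriesK Fq p) * Kabs Fq (seriesK Fq q) = 1 := by
    rw [← Kabs_mul, ← map_mul, hpq, map_one, ← zpow_zero (Kx Fq), Kabs_Kx_zpow, zpow_zero]
  refine (Kabs_seriesK_le_one p).antisymm ?_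
  rw [← hmul]
  exact mul_le_of_le_one_right (Kabs_nonneg _) (Kabs_seriesK_le_one q)

lemma Kabs_polyK_of_isUnit {p : Fq[X]} (hp : IsUnit p) : Kabs Fq (polyK Fq p) = 1 := by
  obtain ⟨a, ha, rfl⟩ := Polynomial.isUnit_iff.1 hp
  rw [polyK_C]
  exact Kabs_seriesK_of_isUnit (ha.map _)

lemma one_le_Kabs_polyK {p : Fq[X]} (hp : polyK Fq p ≠ 0) : 1 ≤ Kabs Fq (polyK Fq p) := by
  rw [Kabs_of_ne_zero hp]
  exact one_le_zpow₀ one_lt_card_cast.le (neg_nonneg.2 (order_polyK_nonpos p))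

lemma Kabs_det_map_seriesK {ι : Type*} [Fintype ι] [DecidableEq ι] {A : Matrix ι ι Fq⟦X⟧}
    (hA : IsUnit A) : Kabs Fq (A.map (seriesK Fq)).det = 1 := by
  rw [← RingHom.mapMatrix_apply, ← RingHom.map_det]
  exact Kabs_seriesK_of_isUnit ((Matrix.isUnit_iff_isUnit_det A).1 hA)

lemma Kabs_det_map_polyK {ι : Type*} [Fintype ι] [DecidableEq ι] {A : Matrix ι ι Fq[X]}
    (hA : IsUnit A) : Kabs Fq (A.map (polyK Fq)).det = 1 := by
  rw [← RingHom.mapMatrix_apply, ← RingHom.map_det]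
  exact Kabs_polyK_of_isUnit ((Matrix.isUnit_iff_isUnit_det A).1 hA)

variable {d : ℕ}

lemma vnorm_nonneg (v : Fin d → Kt Fq) : 0 ≤ vnorm Fq v :=
  Real.iSup_nonneg fun i => Kabs_nonneg (v i)

lemma Kabs_le_vnorm (v : Fin d → Kt Fq) (i : Fin d) : Kabs Fq (v i) ≤ vnorm Fq v :=
  le_ciSup (f := fun i => Kabs Fq (v i)) (Set.finite_range _).bddAbove i

lemma vnorm_le {v : Fin d → Kt Fq} {r : ℝ} (hr : 0 ≤ r) (hv : ∀ i, Kabs Fq (v i) ≤ r) :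
    vnorm Fq v ≤ r :=
  Real.iSup_le hv hr

lemma vnorm_single_le (k : Fin d) (f : Kt Fq) : vnorm Fq (Pi.single k f) ≤ Kabs Fq f := by
  refine vnorm_le (Kabs_nonneg f) fun i => ?_
  rcases eq_or_ne i k with rfl | hik
  · rw [Pi.single_eq_same]
  · rw [Pi.single_eq_of_ne hik, Kabs_zero]
    exact Kabs_nonneg f

lemma vnorm_map_seriesK_mulVec_le {e : ℕ} (A : Matrix (Fin e) (Fin d) Fq⟦X⟧)
    (v : Fin d → Kt Fq) : vnorm Fq (A.map (seriesK Fq) *ᵥ v) ≤ vnorm Fq v := by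
  refine vnorm_le (vnorm_nonneg v) fun i => ?_
  rw [Matrix.mulVec, dotProduct]
  refine Kabs_sum_le (vnorm_nonneg v) fun j _ => ?_
  rw [Kabs_mul]
  exact (mul_le_of_le_one_left (Kabs_nonneg _) (Kabs_seriesK_le_one _)).trans (Kabs_le_vnorm v j)

lemma vnorm_map_seriesK_mulVec {A : Matrix (Fin d) (Fin d) Fq⟦X⟧} (hA : IsUnit A)
    (v : Fin d → Kt Fq) : vnorm Fq (A.map (seriesK Fq) *ᵥ v) = vnorm Fq v := by
  refine (vnorm_map_seriesK_mulVec_le A v).antisymm ?_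
  obtain ⟨A, rfl⟩ := hA
  have hcancel : (A⁻¹).val.map (seriesK Fq) *ᵥ (A.val.map (seriesK Fq) *ᵥ v) = v := by
    rw [Matrix.mulVec_mulVec, ← Matrix.map_mul, Units.inv_mul,
      Matrix.map_one _ (map_zero _) (map_one _), Matrix.one_mulVec]
  calc vnorm Fq v = vnorm Fq ((A⁻¹).val.map (seriesK Fq) *ᵥ (A.val.map (seriesK Fq) *ᵥ v)) := by
        rw [hcancel]
    _ ≤ vnorm Fq (A.val.map (seriesK Fq) *ᵥ v) := vnorm_map_seriesK_mulVec_le _ _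

lemma minima_lattice_map_seriesK_mul {A : Matrix (Fin d) (Fin d) Fq⟦X⟧} (hA : IsUnit A)
    (g : Matrix (Fin d) (Fin d) (Kt Fq)) (i : ℕ) :
    minima Fq (lattice Fq (A.map (seriesK Fq) * g)) i = minima Fq (lattice Fq g) i := by
  rw [lattice_mul]
  exact minimaN_image _ (Matrix.mulVec_injective_of_isUnit (hA.map (seriesK Fq).mapMatrix))
    (vnorm_map_seriesK_mulVec hA) _ i

lemma zpow_card_le_Kabs {m : Fin d → ℤ} {v : Fin d → Kt Fq} (hv : v ∈ lattice Fq (diagX Fq m))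
    {k : Fin d} (hk : v k ≠ 0) : (Fintype.card Fq : ℝ) ^ m k ≤ Kabs Fq (v k) := by
  obtain ⟨p, hp⟩ := exists_eq_zpow_mul_of_mem_lattice_diagX hv k
  rw [hp] at hk
  rw [hp, Kabs_mul, Kabs_Kx_zpow]
  exact le_mul_of_one_le_right (by positivity) (one_le_Kabs_polyK (right_ne_zero_of_mul hk))

lemma exists_linearIndependent_lattice_diagX {m : Fin d → ℤ} (hm : Monotone m) (i : Fin d) :
    ∃ v : Fin (i + 1) → Fin d → Kt Fq, (∀ j, v j ∈ lattice Fq (diagX Fq m)) ∧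
      LinearIndependent (Kt Fq) v ∧ ∀ j, vnorm Fq (v j) ≤ (Fintype.card Fq : ℝ) ^ m i := by
  let b (k : Fin d) : Fin d → Kt Fq := Pi.single k (Kx Fq ^ m k)
  let σ : Fin (i + 1) → Fin d := Fin.castLE i.isLt
  have hb : LinearIndependent (Kt Fq) b :=
    Pi.linearIndependent_single_of_ne_zero fun k => zpow_ne_zero (m k) Kx_ne_zero
  refine ⟨b ∘ σ, fun j => single_zpow_mem_lattice_diagX m (σ j),
    hb.comp σ (Fin.castLE_injective _), fun j => ?_⟩
  have hσ : σ j ≤ i := Nat.le_of_lt_succ j.isLt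
  calc vnorm Fq (b (σ j)) ≤ (Fintype.card Fq : ℝ) ^ m (σ j) :=
        (vnorm_single_le _ _).trans_eq (Kabs_Kx_zpow _)
    _ ≤ (Fintype.card Fq : ℝ) ^ m i := zpow_le_zpow_right₀ one_lt_card_cast.le (hm hσ)

lemma exists_zpow_le_vnorm_of_linearIndependent {m : Fin d → ℤ} (hm : Monotone m) (i : Fin d)
    {v : Fin (i + 1) → Fin d → Kt Fq} (hv : ∀ j, v j ∈ lattice Fq (diagX Fq m))
    (hli : LinearIndependent (Kt Fq) v) :
    ∃ j, (Fintype.card Fq : ℝ) ^ m i ≤ vnorm Fq (v j) := by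
  obtain ⟨j, k, hk, hvk⟩ := exists_notMem_apply_ne_zero hli (s := Finset.Iio i) (by simp)
  have hik : i ≤ k := by simpa only [Finset.mem_Iio, not_lt] using hk
  refine ⟨j, ?_⟩
  calc (Fintype.card Fq : ℝ) ^ m i ≤ (Fintype.card Fq : ℝ) ^ m k :=
        zpow_le_zpow_right₀ one_lt_card_cast.le (hm hik)
    _ ≤ Kabs Fq (v j k) := zpow_card_le_Kabs (hv j) hvk
    _ ≤ vnorm Fq (v j) := Kabs_le_vnorm _ _

theorem minima_lattice_diagX {m : Fin d → ℤ} (hm : Monotone m) (i : Fin d) :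
    minima Fq (lattice Fq (diagX Fq m)) (i + 1) = (Fintype.card Fq : ℝ) ^ m i := by
  unfold minima minimaN
  refine IsLeast.csInf_eq ⟨⟨by positivity, exists_linearIndependent_lattice_diagX hm i⟩, ?_⟩
  rintro r ⟨-, v, hv, hli, hvr⟩
  obtain ⟨j, hj⟩ := exists_zpow_le_vnorm_of_linearIndependent hm i hv hli
  exact hj.trans (hvr j)

end AbsoluteValue

/-- Every lattice `gR^d` can be brought to the diagonal form
`diag(x^{m₁},…,x^{m_d})` with `q^{m_i} = λ_i(Λ)`, by multiplying on the left by a matrix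
`u ∈ GL_d(O)` and on the right by a matrix `h` over `R = 𝔽_q[x]` with `|det h| = 1`. -/
theorem ugh_diagonal_form {d : ℕ} (hd : 2 ≤ d)
    (g : Matrix (Fin d) (Fin d) (Kt Fq)) (hg : g.det ≠ 0) :
    ∃ (u : Matrix (Fin d) (Fin d) (Kt Fq)) (h₀ : Matrix (Fin d) (Fin d) (Polynomial Fq))
      (m : Fin d → ℤ),
      (∀ i j, Kabs Fq (u i j) ≤ 1) ∧ Kabs Fq u.det = 1 ∧
      Kabs Fq (h₀.map (polyK Fq)).det = 1 ∧
      (∀ i : Fin d, (Fintype.card Fq : ℝ) ^ m i = minima Fq (lattice Fq g) ((i : ℕ) + 1)) ∧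
      u * g * h₀.map (polyK Fq) = Matrix.diagonal (fun i => Kx Fq ^ m i) ∧
      lattice Fq (u * g) = lattice Fq (Matrix.diagonal (fun i => Kx Fq ^ m i)) := by
  obtain ⟨u, h, m, hu, hh, hm, hugh⟩ := exists_map_mul_mul_map_eq_diagX_monotone hg
  have hlattice : lattice Fq (u.map (seriesK Fq) * g) = lattice Fq (diagX Fq m) := by
    rw [← hugh, lattice_mul_map_polyK _ hh]
  refine ⟨u.map (seriesK Fq), h, m, fun i j => Kabs_seriesK_le_one _, Kabs_det_map_seriesK hu,
    Kabs_det_map_polyK hh, fun i => ?_, hugh, hlattice⟩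
  rw [← minima_lattice_diagX hm, ← hlattice, minima_lattice_map_seriesK_mul hu]
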